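/- Let p be a prime and D a finite-dimensional central division algebra over ℚ_p (its center is exactly ℚ_p) with dim_{ℚ_p} D > 1. Let D₀ = {x ∈ D : tr(L_x) = 0}, where L_x : D → D is the ℚ_p-linear map of left multiplication by x and tr denotes the trace of a ℚ_p-linear endomorphism. Then D₀ is closed under the bracket ⁅x, y⁆ = x*y − y*x, and as a Lie algebra over ℚ_p, D₀ is simple, perfect, and toral; in particular, D₀ is not pluperfect. -/

import Mathlib

/-- A Lie algebra `L` over a field `F` is *toral* if for every `x ∈ L` the adjoint
endomorphism `ad x : L → L`, `y ↦ ⁅x, y⁆`, is semisimple, i.e. every `ad x`-invariant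
`F`-subspace of `L` has an `ad x`-invariant complement. -/
def IsToral (F L : Type*) [Field F] [LieRing L] [LieAlgebra F L] : Prop :=
  ∀ x : L, ∀ p : Submodule F L, (∀ y ∈ p, ⁅x, y⁆ ∈ p) →
    ∃ q : Submodule F L, (∀ y ∈ q, ⁅x, y⁆ ∈ q) ∧ IsCompl p q

/-- A Lie algebra `L` is *pluperfect* if every toral quotient of `L` is trivial:
for every Lie ideal `I` with `L ⧸ I` toral, one has `I = ⊤`. -/
def IsPluperfect (F L : Type*) [Field F] [LieRing L] [LieAlgebra F L] : Prop :=
  ∀ I : LieIdeal F L, IsToral F (L ⧸ I) → I = ⊤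

attribute [local instance 100] LieRing.ofAssociativeRing

/-!
Multiplication by an element of a division algebra `D` has irreducible minimal polynomial, so it is
semisimple. Over a perfect field, `ad` of it on `End D` is then semisimple as well, and so are the
restrictions of the latter to `D` and to the trace-zero part `D₀`.

For simplicity, a nonzero ideal of `D₀` comes from a noncentral Lie ideal of `D = F ⊕ D₀`, which by
a theorem of Herstein contains `⁅D, D⁆`. The form `(x, y) ↦ tr (x * y)` is nondegenerate, and the
orthogonal of `⁅D, D⁆` is the center `F`, whose own orthogonal is `D₀`; hence `⁅D, D⁆ = D₀`.
-/

section Semisimple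

open Polynomial

variable {R M N : Type*} [CommRing R] [AddCommGroup M] [Module R M] [AddCommGroup N] [Module R N]
  {f : Module.End R M} {g : Module.End R N} {i : M →ₗ[R] N}

lemma isSemisimple_of_injective (hi : Function.Injective i) (hfg : i ∘ₗ f = g ∘ₗ i)
    (hg : g.IsSemisimple) : f.IsSemisimple := by
  let φ : Module.AEval' f →ₗ[R[X]] Module.AEval' g :=
    LinearMap.ofAEval f ((Module.AEval'.of g).toLinearMap ∘ₗ i) fun x ↦ by
      simpa [Module.AEval'.X_smul_of] using LinearMap.congr_fun hfg x
  have hφ : Function.Injective φ :=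
    (Module.AEval'.of g).injective.comp (hi.comp (Module.AEval'.of f).symm.injective)
  have : IsSemisimpleModule R[X] (Module.AEval' g) := hg
  exact IsSemisimpleModule.of_injective φ hφ

lemma isSemisimple_of_surjective (hi : Function.Surjective i) (hfg : i ∘ₗ f = g ∘ₗ i)
    (hf : f.IsSemisimple) : g.IsSemisimple := by
  let φ : Module.AEval' f →ₗ[R[X]] Module.AEval' g :=
    LinearMap.ofAEval f ((Module.AEval'.of g).toLinearMap ∘ₗ i) fun x ↦ by
      simpa [Module.AEval'.X_smul_of] using LinearMap.congr_fun hfg x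
  have hφ : Function.Surjective φ :=
    (Module.AEval'.of g).surjective.comp (hi.comp (Module.AEval'.of f).symm.surjective)
  have : IsSemisimpleModule R[X] (Module.AEval' f) := hf
  exact IsSemisimpleModule.of_surjective φ hφ

end Semisimple

section Toral

variable {F L L' : Type*} [Field F] [LieRing L] [LieAlgebra F L] [LieRing L'] [LieAlgebra F L']

lemma isToral_iff_isSemisimple_ad :
    IsToral F L ↔ ∀ x : L, (LieAlgebra.ad F L x).IsSemisimple := by
  simp only [IsToral, Module.End.isSemisimple_iff,
    Module.End.mem_invtSubmodule_iff_forall_mem_of_mem, LieAlgebra.ad_apply]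

lemma IsToral.of_injective (f : L →ₗ⁅F⁆ L') (hf : Function.Injective f) (h : IsToral F L') :
    IsToral F L := by
  rw [isToral_iff_isSemisimple_ad] at h ⊢
  exact fun x ↦ isSemisimple_of_injective (g := LieAlgebra.ad F L' (f x)) (i := f.toLinearMap) hf
    (LinearMap.ext fun y ↦ f.map_lie x y) (h (f x))

lemma IsToral.of_surjective (f : L →ₗ⁅F⁆ L') (hf : Function.Surjective f) (h : IsToral F L) :
    IsToral F L' := by
  rw [isToral_iff_isSemisimple_ad] at h ⊢
  intro x
  obtain ⟨x, rfl⟩ := hf x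
  exact isSemisimple_of_surjective (i := f.toLinearMap) hf
    (LinearMap.ext fun y ↦ f.map_lie x y) (h x)

lemma IsToral.not_isPluperfect [Nontrivial L] (h : IsToral F L) : ¬ IsPluperfect F L :=
  let π : L →ₗ⁅F⁆ L ⧸ (⊥ : LieIdeal F L) :=
    { toLinearMap := (LieSubmodule.Quotient.mk' ⊥).toLinearMap
      map_lie' := LieSubmodule.Quotient.mk_bracket ⊥ _ _ }
  fun hL ↦ bot_ne_top (hL ⊥ (h.of_surjective π (LieSubmodule.Quotient.surjective_mk' ⊥)))

lemma isSemisimple_ad_of_squarefree_minpoly [PerfectField F] {A : Type*} [Ring A] [Algebra F A]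
    [FiniteDimensional F A] {a : A} (ha : Squarefree (minpoly F a)) :
    (LieAlgebra.ad F A a).IsSemisimple := by
  have hmul : (Algebra.lmul F A a).IsSemisimple :=
    Module.End.isSemisimple_of_squarefree_aeval_eq_zero ha <| by
      rw [Polynomial.aeval_algHom_apply, minpoly.aeval, map_zero]
  refine isSemisimple_of_injective (i := (Algebra.lmul F A).toLinearMap) Algebra.lmul_injective ?_
    (LieAlgebra.ad_isSemisimple_of_isSemisimple hmul)
  ext x : 1
  change Algebra.lmul F A ⁅a, x⁆ = ⁅Algebra.lmul F A a, Algebra.lmul F A x⁆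
  simp only [Ring.lie_def, map_sub, map_mul]

lemma isToral_of_divisionRing (F D : Type*) [Field F] [PerfectField F] [DivisionRing D]
    [Algebra F D] [FiniteDimensional F D] : IsToral F D :=
  isToral_iff_isSemisimple_ad.2 fun x ↦ isSemisimple_ad_of_squarefree_minpoly
    (minpoly.irreducible (Algebra.IsIntegral.isIntegral x)).squarefree

end Toral

section SimpleRing

variable {A : Type*} [Ring A] [IsSimpleRing A]

open scoped Pointwise in
lemma mem_of_forall_mul_mul_mem {c : A} (hc : c ≠ 0) {S : AddSubgroup A}
    (hS : ∀ a b, a * c * b ∈ S) (x : A) : x ∈ S := by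
  have hspan : TwoSidedIdeal.span {c} = ⊤ :=
    (eq_bot_or_eq_top _).resolve_left fun h ↦ hc <| by
      simpa [h] using TwoSidedIdeal.subset_span (Set.mem_singleton c)
  have hx : x ∈ TwoSidedIdeal.span {c} := hspan ▸ trivial
  rw [TwoSidedIdeal.mem_span_iff_mem_addSubgroup_closure] at hx
  refine (AddSubgroup.closure_le S).2 ?_ hx
  rintro _ ⟨_, ⟨a, -, _, rfl, rfl⟩, b, -, rfl⟩
  exact hS a b

lemma eq_zero_of_forall_mul_mul_self_eq_zero {x : A} (hx : ∀ a, x * a * x = 0) : x = 0 := by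
  by_contra hx0
  have h1 : (1 : A) ∈ (AddMonoidHom.mulLeft x).ker :=
    mem_of_forall_mul_mul_mem hx0 (fun a b ↦ by simp [← mul_assoc, hx]) 1
  exact hx0 (by simpa using h1)

lemma eq_zero_of_two_mul_eq_zero [NeZero (2 : A)] {x : A} (hx : 2 * x = 0) : x = 0 := by
  by_contra hx0
  have h1 : (1 : A) ∈ (AddMonoidHom.mulLeft (2 : A)).ker :=
    mem_of_forall_mul_mul_mem hx0 (fun a b ↦ by
      change 2 * (a * x * b) = 0
      rw [← mul_assoc, ← mul_assoc, (Commute.ofNat_left 2 a).eq, mul_assoc a, hx, mul_zero,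
        zero_mul]) 1
  exact two_ne_zero (α := A) (by simpa using h1)

lemma lie_eq_zero_of_forall_lie_lie_eq_zero [NeZero (2 : A)] {u : A}
    (hu : ∀ a : A, ⁅u, ⁅u, a⁆⁆ = 0) (a : A) : ⁅u, a⁆ = 0 := by
  have lie_mul (a b : A) : ⁅u, a * b⁆ = ⁅u, a⁆ * b + a * ⁅u, b⁆ := by
    simp only [Ring.lie_def]
    noncomm_ring
  have lie_mul_lie (b : A) : ⁅u, a⁆ * ⁅u, b⁆ = 0 :=
    eq_zero_of_two_mul_eq_zero <| by
      simpa [lie_mul, hu, two_mul] using hu (a * b)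
  refine eq_zero_of_forall_mul_mul_self_eq_zero fun b ↦ ?_
  simpa [lie_mul, mul_add, ← mul_assoc, lie_mul_lie] using lie_mul_lie (b * a)

end SimpleRing

section Herstein

variable {R A : Type*} [CommRing R] [Ring A] [Algebra R A] {U : LieIdeal R A} {x y : A}

lemma mul_mem_normalizer (hx : x ∈ U.normalizer) (hy : y ∈ U.normalizer) :
    x * y ∈ U.normalizer := by
  rw [LieSubmodule.mem_normalizer] at hx hy ⊢
  intro a
  have h : ⁅a, x * y⁆ = ⁅a * x, y⁆ + ⁅y * a, x⁆ := by
    simp only [Ring.lie_def]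
    noncomm_ring
  exact h ▸ add_mem (hy _) (hx _)

lemma mul_lie_mul_mem_normalizer (hx : x ∈ U.normalizer) (hy : y ∈ U.normalizer) (a b : A) :
    a * ⁅x, y⁆ * b ∈ U.normalizer := by
  have lie_mul_mem (e : A) : ⁅x, y⁆ * e ∈ U.normalizer := by
    have h : ⁅x, y⁆ * e = ⁅x, y * e⁆ - y * ⁅x, e⁆ := by
      simp only [Ring.lie_def]
      noncomm_ring
    rw [h]
    exact sub_mem (lie_mem_left R A _ x _ hx) (mul_mem_normalizer hy (lie_mem_left R A _ x e hx))
  have h : a * ⁅x, y⁆ * b = ⁅a, ⁅x, y⁆ * b⁆ + ⁅x, y⁆ * (b * a) := by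
    simp only [Ring.lie_def]
    noncomm_ring
  rw [h]
  exact add_mem (lie_mem_right R A _ a _ (lie_mul_mem b)) (lie_mul_mem (b * a))

/-- A theorem of Herstein. The normalizer of `U` is a subring containing the two-sided ideal
generated by its commutators, hence it is everything unless it is commutative. -/
theorem le_center_or_derived_le_of_isSimpleRing [IsSimpleRing A] [NeZero (2 : A)]
    (U : LieIdeal R A) :
    U ≤ LieAlgebra.center R A ∨ ⁅(⊤ : LieIdeal R A), (⊤ : LieIdeal R A)⁆ ≤ U := by
  by_cases h : ∀ x ∈ U.normalizer, ∀ y ∈ U.normalizer, ⁅x, y⁆ = 0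
  · left
    intro u hu a
    have hlie (b : A) : ⁅u, ⁅u, b⁆⁆ = 0 :=
      h u (U.le_normalizer hu) _ (U.le_normalizer (lie_mem_left R A U u b hu))
    rw [← lie_skew, lie_eq_zero_of_forall_lie_lie_eq_zero hlie, neg_zero]
  · right
    push Not at h
    obtain ⟨x, hx, y, hy, hxy⟩ := h
    rw [LieSubmodule.top_lie_le_iff_le_normalizer]
    intro z _
    exact mem_of_forall_mul_mul_mem (S := U.normalizer.toSubmodule.toAddSubgroup) hxy
      (mul_lie_mul_mem_normalizer hx hy) z

end Herstein

section Trace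

variable (R A : Type*) [CommRing R] [Ring A] [Algebra R A]

/-- The trace of the left regular representation of `A`. This is `Algebra.trace`, which Mathlib
only defines for commutative `A`. -/
noncomputable def regularTrace : A →ₗ[R] R :=
  LinearMap.trace R A ∘ₗ (Algebra.lmul R A).toLinearMap

/-- The bilinear form `(x, y) ↦ tr (x * y)`, the noncommutative analogue of `Algebra.traceForm`. -/
noncomputable def regularTraceForm : LinearMap.BilinForm R A :=
  (LinearMap.mul R A).compr₂ (regularTrace R A)

variable {R A}

lemma regularTraceForm_apply (x y : A) : regularTraceForm R A x y = regularTrace R A (x * y) := rfl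

lemma regularTrace_mul_comm (x y : A) : regularTrace R A (x * y) = regularTrace R A (y * x) := by
  change LinearMap.trace R A (Algebra.lmul R A (x * y)) =
    LinearMap.trace R A (Algebra.lmul R A (y * x))
  rw [map_mul (Algebra.lmul R A), map_mul (Algebra.lmul R A), LinearMap.trace_mul_comm]

lemma regularTrace_algebraMap [Module.Free R A] [Module.Finite R A] (c : R) :
    regularTrace R A (algebraMap R A c) = Module.finrank R A * c := by
  have trace_one : regularTrace R A 1 = Module.finrank R A := by
    change LinearMap.trace R A (Algebra.lmul R A 1) = _
    rw [map_one, LinearMap.trace_one]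
  rw [Algebra.algebraMap_eq_smul_one, map_smul, smul_eq_mul, mul_comm, trace_one]

lemma regularTraceForm_isSymm : (regularTraceForm R A).IsSymm :=
  ⟨fun x y ↦ regularTrace_mul_comm x y⟩

variable (R A) in
/-- The Lie subalgebra of elements of trace zero in the left regular representation. -/
noncomputable def traceZero : LieSubalgebra R A where
  toSubmodule := LinearMap.ker (regularTrace R A)
  lie_mem' {x y} _ _ := by
    simp [Ring.lie_def, regularTrace_mul_comm x y]

lemma mem_traceZero {x : A} : x ∈ traceZero R A ↔ regularTrace R A x = 0 := Iff.rfl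

lemma mem_lieCenter_iff {x : A} :
    x ∈ LieAlgebra.center R A ↔ x ∈ Subalgebra.center R A := by
  simp only [LieModule.mem_maxTrivSubmodule, Subalgebra.mem_center_iff, Ring.lie_def, sub_eq_zero]

lemma lie_sub_algebraMap (a x : A) (c : R) : ⁅a - algebraMap R A c, x⁆ = ⁅a, x⁆ := by
  simp [Ring.lie_def, sub_mul, mul_sub, Algebra.commutes]

end Trace

section TraceZero

variable {F A : Type*} [Field F] [Ring A] [Algebra F A] [FiniteDimensional F A]

lemma exists_sub_algebraMap_mem_traceZero (hF : (Module.finrank F A : F) ≠ 0) (a : A) :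
    ∃ c : F, a - algebraMap F A c ∈ traceZero F A := by
  refine ⟨(Module.finrank F A : F)⁻¹ * regularTrace F A a, ?_⟩
  rw [mem_traceZero, map_sub, regularTrace_algebraMap, mul_inv_cancel_left₀ hF, sub_self]

lemma exists_lieIdeal_comap_incl_eq (hF : (Module.finrank F A : F) ≠ 0)
    (I : LieIdeal F (traceZero F A)) :
    ∃ U : LieIdeal F A, U.comap (traceZero F A).incl = I := by
  let U : LieIdeal F A :=
    { (I : Submodule F (traceZero F A)).map (traceZero F A).toSubmodule.subtype with
      lie_mem := by
        rintro a _ ⟨u, hu, rfl⟩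
        obtain ⟨c, hc⟩ := exists_sub_algebraMap_mem_traceZero hF a
        exact ⟨⁅(⟨_, hc⟩ : traceZero F A), u⁆, I.lie_mem hu, lie_sub_algebraMap a u.1 c⟩ }
  refine ⟨U, LieSubmodule.ext _ _ fun x ↦ ?_⟩
  exact Function.Injective.mem_set_image Subtype.val_injective

lemma eq_zero_of_mem_traceZero_of_mem_center [Algebra.IsCentral F A]
    (hF : (Module.finrank F A : F) ≠ 0) {x : A} (hx : x ∈ traceZero F A)
    (hxc : x ∈ LieAlgebra.center F A) : x = 0 := by
  obtain ⟨c, rfl⟩ := (Algebra.IsCentral.mem_center_iff F).1 (mem_lieCenter_iff.1 hxc)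
  rw [mem_traceZero, regularTrace_algebraMap] at hx
  rw [(mul_eq_zero.1 hx).resolve_left hF, map_zero]

lemma traceZero_not_isLieAbelian [Algebra.IsCentral F A] (hF : (Module.finrank F A : F) ≠ 0)
    (hdim : Module.finrank F A ≠ 1) : ¬ IsLieAbelian (traceZero F A) := by
  intro hab
  have eq_zero (x : A) (hx : x ∈ traceZero F A) : x = 0 := by
    refine eq_zero_of_mem_traceZero_of_mem_center hF hx fun a ↦ ?_
    obtain ⟨c, hc⟩ := exists_sub_algebraMap_mem_traceZero hF a
    rw [← lie_sub_algebraMap a x c]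
    exact congrArg Subtype.val (hab.trivial ⟨_, hc⟩ ⟨x, hx⟩)
  have bot_eq_top : (⊥ : Subalgebra F A) = ⊤ := by
    refine eq_top_iff.2 fun a _ ↦ ?_
    obtain ⟨c, hc⟩ := exists_sub_algebraMap_mem_traceZero hF a
    exact Algebra.mem_bot.2 ⟨c, (sub_eq_zero.1 (eq_zero _ hc)).symm⟩
  have : Nontrivial A :=
    Module.nontrivial_of_finrank_pos (R := F) <| Nat.pos_of_ne_zero fun h ↦ hF <| by
      rw [h, Nat.cast_zero]
  exact hdim (Subalgebra.bot_eq_top_iff_finrank_eq_one.1 bot_eq_top)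

variable [IsSimpleRing A]

lemma eq_zero_of_forall_regularTrace_mul_eq_zero (hF : (Module.finrank F A : F) ≠ 0) {z : A}
    (hz : ∀ y, regularTrace F A (z * y) = 0) : z = 0 := by
  by_contra hz0
  have h1 : (1 : A) ∈ (traceZero F A).toSubmodule.toAddSubgroup :=
    mem_of_forall_mul_mul_mem hz0 (fun a b ↦ by
      change regularTrace F A (a * z * b) = 0
      rw [mul_assoc, regularTrace_mul_comm, mul_assoc, hz]) 1
  have htr : regularTrace F A (algebraMap F A 1) = 0 := by rwa [map_one]
  rw [regularTrace_algebraMap, mul_one] at htr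
  exact hF htr

lemma regularTraceForm_nondegenerate (hF : (Module.finrank F A : F) ≠ 0) :
    (regularTraceForm F A).Nondegenerate :=
  (LinearMap.IsRefl.nondegenerate_iff_separatingLeft (B := regularTraceForm F A)
    regularTraceForm_isSymm.isRefl).2 fun _ hz ↦ eq_zero_of_forall_regularTrace_mul_eq_zero hF hz

lemma orthogonal_derived_le_center (hF : (Module.finrank F A : F) ≠ 0) :
    (regularTraceForm F A).orthogonal
      (⁅(⊤ : LieIdeal F A), (⊤ : LieIdeal F A)⁆ : LieIdeal F A).toSubmodule ≤
      (LieAlgebra.center F A).toSubmodule := by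
  intro z hz a
  refine eq_zero_of_forall_regularTrace_mul_eq_zero hF fun b ↦ ?_
  calc regularTrace F A (⁅a, z⁆ * b) = regularTrace F A (⁅b, a⁆ * z) := by
        rw [Ring.lie_def, Ring.lie_def, sub_mul, sub_mul, map_sub, map_sub, mul_assoc z,
          regularTrace_mul_comm z, regularTrace_mul_comm (a * z), mul_assoc b]
    _ = 0 := hz _ (LieSubmodule.lie_mem_lie (LieSubmodule.mem_top b) (LieSubmodule.mem_top a))

lemma traceZero_le_derived [Algebra.IsCentral F A] (hF : (Module.finrank F A : F) ≠ 0) :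
    (traceZero F A).toSubmodule ≤
      (⁅(⊤ : LieIdeal F A), (⊤ : LieIdeal F A)⁆ : LieIdeal F A).toSubmodule := by
  intro x hx
  rw [← LinearMap.BilinForm.orthogonal_orthogonal (regularTraceForm_nondegenerate hF)
    regularTraceForm_isSymm.isRefl (LieSubmodule.toSubmodule _)]
  intro z hz
  obtain ⟨c, rfl⟩ := (Algebra.IsCentral.mem_center_iff F).1
    (mem_lieCenter_iff.1 (orthogonal_derived_le_center hF hz))
  rw [regularTraceForm_apply, ← Algebra.smul_def, map_smul, mem_traceZero.1 hx, smul_zero]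

theorem isSimple_traceZero [Algebra.IsCentral F A] [NeZero (2 : A)]
    (hF : (Module.finrank F A : F) ≠ 0) (hdim : Module.finrank F A ≠ 1) :
    LieAlgebra.IsSimple F (traceZero F A) := by
  refine ⟨fun I ↦ ?_, traceZero_not_isLieAbelian hF hdim⟩
  obtain ⟨U, rfl⟩ := exists_lieIdeal_comap_incl_eq hF I
  refine (le_center_or_derived_le_of_isSimpleRing U).imp (fun hU ↦ ?_) (fun hU ↦ ?_)
  · exact (LieSubmodule.eq_bot_iff _).2 fun x hx ↦
      Subtype.ext (eq_zero_of_mem_traceZero_of_mem_center hF x.2 (hU hx))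
  · exact eq_top_iff.2 fun x _ ↦ hU (traceZero_le_derived hF x.2)

end TraceZero

lemma lie_top_top_eq_top_of_isSimple {R L : Type*} [CommRing R] [LieRing L] [LieAlgebra R L]
    (h : LieAlgebra.IsSimple R L) : ⁅(⊤ : LieIdeal R L), (⊤ : LieIdeal R L)⁆ = ⊤ :=
  lie_eq_self_of_isAtom_of_nonabelian ⊤ isAtom_top fun hab ↦
    h.non_abelian ((lie_abelian_iff_equiv_lie_abelian LieIdeal.topEquiv).1 hab)

theorem stmt_13_general (F D : Type*) [Field F] [PerfectField F] [NeZero (2 : F)]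
    [DivisionRing D] [Algebra F D] [FiniteDimensional F D]
    (hcentral : Subalgebra.center F D = ⊥)
    (hdim : 1 < Module.finrank F D) (hF : (Module.finrank F D : F) ≠ 0) :
    ∃ D₀ : LieSubalgebra F D,
      (∀ x : D, x ∈ D₀ ↔ LinearMap.trace F D (LinearMap.mulLeft F x) = 0) ∧
      LieAlgebra.IsSimple F D₀ ∧
      ⁅(⊤ : LieIdeal F D₀), (⊤ : LieIdeal F D₀)⁆ = ⊤ ∧
      IsToral F D₀ ∧
      ¬ IsPluperfect F D₀ := by
  have : Algebra.IsCentral F D := ⟨hcentral.le⟩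
  have : NeZero (2 : D) := ⟨by
    rw [← map_ofNat (algebraMap F D) 2]
    exact (map_ne_zero (algebraMap F D)).2 two_ne_zero⟩
  have simple : LieAlgebra.IsSimple F (traceZero F D) := isSimple_traceZero hF hdim.ne'
  have toral : IsToral F (traceZero F D) :=
    (isToral_of_divisionRing F D).of_injective (traceZero F D).incl Subtype.val_injective
  have : Nontrivial (traceZero F D) := LieAlgebra.IsSimple.nontrivial F _
  exact ⟨traceZero F D, fun _ ↦ Iff.rfl, simple, lie_top_top_eq_top_of_isSimple simple, toral,
    toral.not_isPluperfect⟩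

/-- Let `D` be a finite-dimensional central division algebra over `ℚ_p` of dimension
`> 1`, and let `D₀` be the set of `x ∈ D` such that left multiplication by `x` has trace
zero. Then `D₀` is closed under the commutator bracket (it is a Lie subalgebra of `D`),
and as a Lie algebra over `ℚ_p` it is simple, perfect and toral; in particular it is not
pluperfect. -/
theorem stmt_13 (p : ℕ) [Fact p.Prime] (D : Type*) [DivisionRing D] [Algebra ℚ_[p] D]
    [FiniteDimensional ℚ_[p] D]
    (hcentral : Subalgebra.center ℚ_[p] D = ⊥)
    (hdim : 1 < Module.finrank ℚ_[p] D) :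
    ∃ D₀ : LieSubalgebra ℚ_[p] D,
      (∀ x : D, x ∈ D₀ ↔ LinearMap.trace ℚ_[p] D (LinearMap.mulLeft ℚ_[p] x) = 0) ∧
      LieAlgebra.IsSimple ℚ_[p] D₀ ∧
      ⁅(⊤ : LieIdeal ℚ_[p] D₀), (⊤ : LieIdeal ℚ_[p] D₀)⁆ = ⊤ ∧
      IsToral ℚ_[p] D₀ ∧
      ¬ IsPluperfect ℚ_[p] D₀ := by
  exact stmt_13_general ℚ_[p] D hcentral hdim (Nat.cast_ne_zero.2 (Nat.ne_zero_of_lt hdim))
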